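/- If a base change operator ∘ satisfies postulates (G5) and (G6), then for every belief base K the canonical relation ⪯ᵒ_K is total, and hence reflexive. -/

import Mathlib

namespace BeliefRev

variable {L Ω : Type*}

/-- The models of a belief base (a finite set of sentences). -/
def Mod (sat : Ω → L → Prop) (K : Finset L) : Set Ω :=
  {ω | ∀ φ ∈ K, sat ω φ}

/-- `min(S, r)`: the elements of `S` that are `r`-below every element of `S`. -/
def minSet (S : Set Ω) (r : Ω → Ω → Prop) : Set Ω :=
  {ω ∈ S | ∀ ω' ∈ S, r ω ω'}

/-- A binary relation is total. -/
def TotalRel (r : Ω → Ω → Prop) : Prop :=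
  ∀ ω₁ ω₂, r ω₁ ω₂ ∨ r ω₂ ω₁

/-- The strict part of a relation: `ω₁ ≺ ω₂` iff `ω₁ ⪯ ω₂` and not `ω₂ ⪯ ω₁`. -/
def StrictRel (r : Ω → Ω → Prop) (ω₁ ω₂ : Ω) : Prop :=
  r ω₁ ω₂ ∧ ¬ r ω₂ ω₁

/-- Postulate (G1). -/
def G1 (sat : Ω → L → Prop) (op : Finset L → Finset L → Finset L) : Prop :=
  ∀ K Γ, Mod sat (op K Γ) ⊆ Mod sat Γ

/-- Postulate (G2). -/
def G2 [DecidableEq L] (sat : Ω → L → Prop) (op : Finset L → Finset L → Finset L) : Prop :=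
  ∀ K Γ, (Mod sat (K ∪ Γ)).Nonempty → Mod sat (op K Γ) = Mod sat (K ∪ Γ)

/-- Postulate (G3). -/
def G3 (sat : Ω → L → Prop) (op : Finset L → Finset L → Finset L) : Prop :=
  ∀ K Γ, (Mod sat Γ).Nonempty → (Mod sat (op K Γ)).Nonempty

/-- Postulate (G4). -/
def G4 (sat : Ω → L → Prop) (op : Finset L → Finset L → Finset L) : Prop :=
  ∀ K₁ K₂ Γ₁ Γ₂, Mod sat K₁ = Mod sat K₂ → Mod sat Γ₁ = Mod sat Γ₂ →
    Mod sat (op K₁ Γ₁) = Mod sat (op K₂ Γ₂)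

/-- Postulate (G5). -/
def G5 [DecidableEq L] (sat : Ω → L → Prop) (op : Finset L → Finset L → Finset L) : Prop :=
  ∀ K Γ₁ Γ₂, Mod sat (op K Γ₁) ∩ Mod sat Γ₂ ⊆ Mod sat (op K (Γ₁ ∪ Γ₂))

/-- Postulate (G6). -/
def G6 [DecidableEq L] (sat : Ω → L → Prop) (op : Finset L → Finset L → Finset L) : Prop :=
  ∀ K Γ₁ Γ₂, (Mod sat (op K Γ₁) ∩ Mod sat Γ₂).Nonempty →
    Mod sat (op K (Γ₁ ∪ Γ₂)) ⊆ Mod sat (op K Γ₁) ∩ Mod sat Γ₂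

/-- The conjunction of postulates (G1)–(G6). -/
def AGM [DecidableEq L] (sat : Ω → L → Prop) (op : Finset L → Finset L → Finset L) : Prop :=
  G1 sat op ∧ G2 sat op ∧ G3 sat op ∧ G4 sat op ∧ G5 sat op ∧ G6 sat op

/-- The canonical relation `⪯ᵒ_K` obtained from a base change operator. -/
def canonicalRel (sat : Ω → L → Prop) (op : Finset L → Finset L → Finset L)
    (K : Finset L) (ω₁ ω₂ : Ω) : Prop :=
  ∀ Γ : Finset L, ω₁ ∈ Mod sat Γ → ω₂ ∈ Mod sat Γ →
    (ω₁ ∈ Mod sat (op K Γ) ∨ ω₂ ∉ Mod sat (op K Γ))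

/-- A relation is min-retractive. -/
def MinRetractive (sat : Ω → L → Prop) (r : Ω → Ω → Prop) : Prop :=
  ∀ (Γ : Finset L) (ω ω' : Ω), ω ∈ Mod sat Γ → ω' ∈ Mod sat Γ →
    r ω' ω → ω ∈ minSet (Mod sat Γ) r → ω' ∈ minSet (Mod sat Γ) r

/-- A relation is min-complete. -/
def MinComplete (sat : Ω → L → Prop) (r : Ω → Ω → Prop) : Prop :=
  ∀ Γ : Finset L, (Mod sat Γ).Nonempty → (minSet (Mod sat Γ) r).Nonempty

/-- A relation is min-friendly: min-retractive and min-complete. -/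
def MinFriendly (sat : Ω → L → Prop) (r : Ω → Ω → Prop) : Prop :=
  MinRetractive sat r ∧ MinComplete sat r

/-- A relation is min-expressible. -/
def MinExpressible (sat : Ω → L → Prop) (r : Ω → Ω → Prop) : Prop :=
  ∀ Γ : Finset L, ∃ B : Finset L, Mod sat B = minSet (Mod sat Γ) r

/-- An assignment maps each belief base to a *total* relation on interpretations. -/
def IsAssignment (assign : Finset L → Ω → Ω → Prop) : Prop :=
  ∀ K : Finset L, TotalRel (assign K)

/-- Faithfulness of an assignment: conditions (F1), (F2) and (F3). -/
def Faithful (sat : Ω → L → Prop) (assign : Finset L → Ω → Ω → Prop) : Prop :=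
  (∀ (K : Finset L) (ω ω' : Ω), ω ∈ Mod sat K → ω' ∈ Mod sat K →
      ¬ StrictRel (assign K) ω ω') ∧
  (∀ (K : Finset L) (ω ω' : Ω), ω ∈ Mod sat K → ω' ∉ Mod sat K →
      StrictRel (assign K) ω ω') ∧
  (∀ K K' : Finset L, Mod sat K = Mod sat K' → assign K = assign K')

/-- Compatibility of a base change operator with an assignment. -/
def Compatible (sat : Ω → L → Prop) (op : Finset L → Finset L → Finset L)
    (assign : Finset L → Ω → Ω → Prop) : Prop :=
  ∀ K Γ : Finset L, Mod sat (op K Γ) = minSet (Mod sat Γ) (assign K)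

/-- Total preorder representability: there is a faithful assignment compatible with `op`
whose relations are all min-complete and transitive (hence total preorders). -/
def TotalPreorderRepresentable (sat : Ω → L → Prop)
    (op : Finset L → Finset L → Finset L) : Prop :=
  ∃ assign : Finset L → Ω → Ω → Prop,
    IsAssignment assign ∧ Faithful sat assign ∧
    (∀ K : Finset L, MinComplete sat (assign K)) ∧
    (∀ K : Finset L, Transitive (assign K)) ∧
    Compatible sat op assign

/-- A pair of interpretations is detached from `op` in `K`. -/
def Detached (sat : Ω → L → Prop) (op : Finset L → Finset L → Finset L)
    (K : Finset L) (ω ω' : Ω) : Prop :=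
  ∀ Γ : Finset L, ω ∉ Mod sat (op K Γ) ∧ ω' ∉ Mod sat (op K Γ)

/-- Three belief bases form a critical loop for the logic. -/
def CriticalLoop [DecidableEq L] (sat : Ω → L → Prop) (Γ₀ Γ₁ Γ₂ : Finset L) : Prop :=
  ∃ K Γ'₀ Γ'₁ Γ'₂ : Finset L,
    (Mod sat (K ∪ Γ₀) = ∅ ∧ Mod sat (K ∪ Γ₁) = ∅ ∧ Mod sat (K ∪ Γ₂) = ∅) ∧
    ((Mod sat Γ'₀).Nonempty ∧ Mod sat Γ'₀ ⊆ (Mod sat Γ₀ ∩ Mod sat Γ₁) \ Mod sat Γ₂) ∧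
    ((Mod sat Γ'₁).Nonempty ∧ Mod sat Γ'₁ ⊆ (Mod sat Γ₁ ∩ Mod sat Γ₂) \ Mod sat Γ₀) ∧
    ((Mod sat Γ'₂).Nonempty ∧ Mod sat Γ'₂ ⊆ (Mod sat Γ₂ ∩ Mod sat Γ₀) \ Mod sat Γ₁) ∧
    (∀ Γ : Finset L, (Mod sat (Γ'₀ ∪ Γ)).Nonempty → (Mod sat (Γ'₁ ∪ Γ)).Nonempty →
      (Mod sat (Γ'₂ ∪ Γ)).Nonempty →
      ∃ Γ' : Finset L, (Mod sat Γ').Nonempty ∧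
        Mod sat Γ' ⊆ Mod sat Γ \ (Mod sat Γ₀ ∪ Mod sat Γ₁ ∪ Mod sat Γ₂))

/-- The logic admits (exhibits) a critical loop. -/
def AdmitsCriticalLoop [DecidableEq L] (sat : Ω → L → Prop) : Prop :=
  ∃ Γ₀ Γ₁ Γ₂ : Finset L, CriticalLoop sat Γ₀ Γ₁ Γ₂

/-- A logic is disjunctive: any two bases have a base acting as their disjunction. -/
def Disjunctive (sat : Ω → L → Prop) : Prop :=
  ∀ Γ₁ Γ₂ : Finset L, ∃ Δ : Finset L, Mod sat Δ = Mod sat Γ₁ ∪ Mod sat Γ₂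
/-- If `∘` satisfies (G5) and (G6), then for every belief base `K`
the canonical relation `⪯ᵒ_K` is total, and hence reflexive. -/
theorem canonicalRel_total {L Ω : Type*} [DecidableEq L] (sat : Ω → L → Prop)
    (op : Finset L → Finset L → Finset L)
    (h5 : G5 sat op) (h6 : G6 sat op) (K : Finset L) :
    TotalRel (canonicalRel sat op K) ∧ Reflexive (canonicalRel sat op K) := by
  have tot : TotalRel (canonicalRel sat op K) := by
    intro w₁ w₂
    by_contra hcon
    simp only [canonicalRel, not_or, not_forall, not_not] at hcon
    obtain ⟨⟨Γ, a1, a2, a3, a4⟩, ⟨Γ', b1, b2, b3, b4⟩⟩ := hcon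
    have h := h5 K Γ Γ' ⟨a4, b1⟩
    rw [Finset.union_comm] at h
    exact b3 (h6 K Γ' Γ ⟨w₁, b4, a1⟩ h).1
  exact ⟨tot, fun w => (tot w w).elim id id⟩

end BeliefRev
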